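/- Let H > 0 and t ∈ (0, 1/(4H)), and let h_t be the radially symmetric solution of (CMC) on the annulus {r₁(t) < √(x²+y²) < r₂(t)} given by h_t(x,y) = f(√(x²+y²)) with f(r) = ∫_{1/(2H)}^{r} g(ρ)/√(1 − g(ρ)²) dρ, g(ρ) = Hρ + t/ρ, r₁(t) = (1 − √(1 − 4tH))/(2H), r₂(t) = (1 + √(1 − 4tH))/(2H). Let θ₁ < θ₂ and let C be the arc of the circle of radius 1/(2H) centered at the origin parametrized counterclockwise by c(θ) = (cos θ/(2H), sin θ/(2H)), θ ∈ [θ₁, θ₂] (this circle lies inside the annulus since r₁(t) < 1/(2H) < r₂(t)). Then ∫_C ω_{h_t} = (1/2 + 2Ht) · ℓ(C), i.e. ∫_{θ₁}^{θ₂} (∂_x h_t(c(θ)) c₂'(θ) − ∂_y h_t(c(θ)) c₁'(θ))/W_{h_t}(c(θ)) dθ = (1/2 + 2Ht)(θ₂ − θ₁)/(2H), where ℓ(C) = (θ₂ − θ₁)/(2H) is the length of C. In particular ∫_C ω_{h_t} → ℓ(C) as t → 1/(4H). -/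

import Mathlib

open Real MeasureTheory Filter Set

noncomputable section

/-- Euclidean norm on `ℝ × ℝ`. -/
def enorm2 (p : ℝ × ℝ) : ℝ := Real.sqrt (p.1 ^ 2 + p.2 ^ 2)

/-- Partial derivative in the `x` direction. -/
def pdx (u : ℝ × ℝ → ℝ) (p : ℝ × ℝ) : ℝ := fderiv ℝ u p (1, 0)

/-- Partial derivative in the `y` direction. -/
def pdy (u : ℝ × ℝ → ℝ) (p : ℝ × ℝ) : ℝ := fderiv ℝ u p (0, 1)

/-- The area element `W_u = √(1 + |∇u|²)`. -/
def Wgraph (u : ℝ × ℝ → ℝ) (p : ℝ × ℝ) : ℝ :=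
  Real.sqrt (1 + (pdx u p) ^ 2 + (pdy u p) ^ 2)

/-- Upward unit normal of the graph of `u`. -/
def normalVec (u : ℝ × ℝ → ℝ) (p : ℝ × ℝ) : ℝ × ℝ × ℝ :=
  (-pdx u p / Wgraph u p, -pdy u p / Wgraph u p, 1 / Wgraph u p)

/-- `u` is a (C²) solution of the constant mean curvature `H` equation on `Ω`. -/
def IsCMCSolution (H : ℝ) (Ω : Set (ℝ × ℝ)) (u : ℝ × ℝ → ℝ) : Prop :=
  ContDiffOn ℝ 2 u Ω ∧ ∀ p ∈ Ω,
    (1 + (pdy u p) ^ 2) * pdx (fun q => pdx u q) p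
      - 2 * (pdx u p) * (pdy u p) * pdy (fun q => pdx u q) p
      + (1 + (pdx u p) ^ 2) * pdy (fun q => pdy u q) p
    = 2 * H * (1 + (pdx u p) ^ 2 + (pdy u p) ^ 2) ^ ((3 : ℝ) / 2)

/-- `C` is a divergence line of the sequence `u` on `Ω`. -/
def IsDivergenceLine (H : ℝ) (Ω : Set (ℝ × ℝ)) (u : ℕ → ℝ × ℝ → ℝ)
    (C : Set (ℝ × ℝ)) : Prop :=
  ∃ z₁ : ℝ × ℝ, C ⊆ Ω ∧ (∀ q ∈ C, enorm2 (q - z₁) = 1 / (2 * H)) ∧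
    IsConnected C ∧ C.Nontrivial ∧
    ∃ φ : ℕ → ℕ, StrictMono φ ∧ ∀ Q ∈ C,
      Tendsto (fun n => normalVec (u (φ n)) Q) atTop
        (nhds (2 * H * (z₁.1 - Q.1), 2 * H * (z₁.2 - Q.2), 0))

/-- `g(ρ) = Hρ + t/ρ`. -/
def gfun (H t ρ : ℝ) : ℝ := H * ρ + t / ρ

/-- The radial profile `f(r) = ∫_{1/(2H)}^r g(ρ)/√(1-g(ρ)²) dρ`. -/
def ffun (H t r : ℝ) : ℝ :=
  ∫ ρ in (1 / (2 * H))..r, gfun H t ρ / Real.sqrt (1 - (gfun H t ρ) ^ 2)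

/-- The radially symmetric solution `h_t(x,y) = f(√(x²+y²))`. -/
def hfun (H t : ℝ) (p : ℝ × ℝ) : ℝ := ffun H t (enorm2 p)

/-!
For a radial function `u = f(|·|)` the gradient at `p` is `f'(|p|) p / |p|`. Since `(-p.2, p.1)` is
tangent at `p` to the circle through `p` centered at the origin, `ω_u` takes on it the value
`|p| f' / √(1 + f'²)`. The profile of `h_t` has `f' = g / √(1 - g²)`, that is `f' = tan (arcsin g)`,
and `m / √(1 + m²) = sin (arctan m)`, so this value is `|p| g(|p|)`. It is constant on circles, and
on the circle of radius `1/(2H)` one has `g = 1/2 + 2Ht`.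
-/

/-- The 1-form `ω_u = (∂_x u dy - ∂_y u dx) / W_u`, evaluated at the point `p` on the tangent
vector `v`; along a curve `γ` the integrand of `∫_γ ω_u` is `graphForm u (γ t) (γ' t)`. -/
def graphForm (u : ℝ × ℝ → ℝ) (p v : ℝ × ℝ) : ℝ :=
  (pdx u p * v.2 - pdy u p * v.1) / Wgraph u p

section Radial

variable {f : ℝ → ℝ} {m : ℝ} {p : ℝ × ℝ}

lemma enorm2_nonneg (p : ℝ × ℝ) : 0 ≤ enorm2 p := Real.sqrt_nonneg _

lemma enorm2_sq (p : ℝ × ℝ) : enorm2 p ^ 2 = p.1 ^ 2 + p.2 ^ 2 := Real.sq_sqrt (by positivity)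

lemma enorm2_cos_sin_div {κ : ℝ} (hκ : 0 ≤ κ) (θ : ℝ) :
    enorm2 (Real.cos θ / κ, Real.sin θ / κ) = 1 / κ := by
  have hsq : (Real.cos θ / κ) ^ 2 + (Real.sin θ / κ) ^ 2 = (1 / κ) ^ 2 := by
    rw [div_pow, div_pow, ← add_div, Real.cos_sq_add_sin_sq, div_pow, one_pow]
  rw [enorm2, hsq, Real.sqrt_sq (by positivity)]

lemma hasFDerivAt_enorm2 (hp : enorm2 p ≠ 0) :
    HasFDerivAt enorm2
      ((p.1 / enorm2 p) • ContinuousLinearMap.fst ℝ ℝ ℝ +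
        (p.2 / enorm2 p) • ContinuousLinearMap.snd ℝ ℝ ℝ) p := by
  have hsum_ne : p.1 ^ 2 + p.2 ^ 2 ≠ 0 := enorm2_sq p ▸ pow_ne_zero 2 hp
  have hsqrt := ((hasFDerivAt_fst (𝕜 := ℝ) (E := ℝ) (F := ℝ) (p := p)).pow 2).add
    ((hasFDerivAt_snd (𝕜 := ℝ) (E := ℝ) (F := ℝ) (p := p)).pow 2) |>.sqrt hsum_ne
  refine hsqrt.congr_fderiv ?_
  change (1 / (2 * enorm2 p)) • _ = _
  ext <;> simp <;> field_simp

lemma hasFDerivAt_comp_enorm2 (hp : enorm2 p ≠ 0) (hf : HasDerivAt f m (enorm2 p)) :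
    HasFDerivAt (fun q => f (enorm2 q))
      (m • ((p.1 / enorm2 p) • ContinuousLinearMap.fst ℝ ℝ ℝ +
        (p.2 / enorm2 p) • ContinuousLinearMap.snd ℝ ℝ ℝ)) p :=
  hf.comp_hasFDerivAt p (hasFDerivAt_enorm2 hp)

lemma pdx_comp_enorm2 (hp : enorm2 p ≠ 0) (hf : HasDerivAt f m (enorm2 p)) :
    pdx (fun q => f (enorm2 q)) p = m * (p.1 / enorm2 p) := by
  simp [pdx, (hasFDerivAt_comp_enorm2 hp hf).fderiv]

lemma pdy_comp_enorm2 (hp : enorm2 p ≠ 0) (hf : HasDerivAt f m (enorm2 p)) :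
    pdy (fun q => f (enorm2 q)) p = m * (p.2 / enorm2 p) := by
  simp [pdy, (hasFDerivAt_comp_enorm2 hp hf).fderiv]

lemma Wgraph_comp_enorm2 (hp : enorm2 p ≠ 0) (hf : HasDerivAt f m (enorm2 p)) :
    Wgraph (fun q => f (enorm2 q)) p = Real.sqrt (1 + m ^ 2) := by
  rw [Wgraph, pdx_comp_enorm2 hp hf, pdy_comp_enorm2 hp hf]
  congr 1
  field_simp
  linear_combination -m ^ 2 * enorm2_sq p

lemma graphForm_comp_enorm2_rotation (hp : enorm2 p ≠ 0) (hf : HasDerivAt f m (enorm2 p)) :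
    graphForm (fun q => f (enorm2 q)) p (-p.2, p.1) =
      enorm2 p * (m / Real.sqrt (1 + m ^ 2)) := by
  have hnum : m * (p.1 / enorm2 p) * p.1 - m * (p.2 / enorm2 p) * -p.2 = enorm2 p * m := by
    field_simp
    linear_combination -m * enorm2_sq p
  rw [graphForm, pdx_comp_enorm2 hp hf, pdy_comp_enorm2 hp hf, Wgraph_comp_enorm2 hp hf, hnum,
    mul_div_assoc]

end Radial

lemma div_sqrt_one_sub_sq_div_sqrt_one_add_sq {s : ℝ} (hs : |s| < 1) :
    s / Real.sqrt (1 - s ^ 2) / Real.sqrt (1 + (s / Real.sqrt (1 - s ^ 2)) ^ 2) = s := by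
  obtain ⟨hs_lower, hs_upper⟩ := abs_lt.1 hs
  rw [← Real.tan_arcsin, ← Real.sin_arctan,
    Real.arctan_tan (Real.neg_pi_div_two_lt_arcsin.2 hs_lower)
      (Real.arcsin_lt_pi_div_two.2 hs_upper),
    Real.sin_arcsin hs_lower.le hs_upper.le]

section Profile

variable {H t r : ℝ}

lemma gfun_one_div_two_mul (hH : H ≠ 0) : gfun H t (1 / (2 * H)) = 1 / 2 + 2 * H * t := by
  rw [gfun]
  field_simp

lemma abs_gfun_one_div_two_mul_lt_one (hH : 0 < H)
    (ht : t ∈ Set.Ioo (-(3 / (4 * H))) (1 / (4 * H))) : |gfun H t (1 / (2 * H))| < 1 := by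
  obtain ⟨ht_lower, ht_upper⟩ := ht
  rw [← neg_div, div_lt_iff₀ (by positivity)] at ht_lower
  rw [lt_div_iff₀ (by positivity)] at ht_upper
  rw [gfun_one_div_two_mul hH.ne', abs_lt]
  constructor <;> linarith

lemma hasDerivAt_ffun (hH : 0 < H) (hr : 0 < r)
    (hg : ∀ ρ ∈ Set.uIcc (1 / (2 * H)) r, |gfun H t ρ| < 1) :
    HasDerivAt (ffun H t) (gfun H t r / Real.sqrt (1 - gfun H t r ^ 2)) r := by
  have hcont : ∀ ρ ∈ Set.uIcc (1 / (2 * H)) r,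
      ContinuousAt (fun ρ => gfun H t ρ / Real.sqrt (1 - gfun H t ρ ^ 2)) ρ := by
    intro ρ hρ
    have hρ_ne : ρ ≠ 0 := ((lt_min (by positivity) hr).trans_le hρ.1).ne'
    have hsqrt_ne : Real.sqrt (1 - gfun H t ρ ^ 2) ≠ 0 :=
      (Real.sqrt_pos.2 (sub_pos.2 ((sq_lt_one_iff_abs_lt_one _).2 (hg ρ hρ)))).ne'
    have hgcont : ContinuousAt (gfun H t) ρ := by
      unfold gfun
      fun_prop (disch := assumption)
    fun_prop (disch := assumption)
  have hmeas : Measurable fun ρ => gfun H t ρ / Real.sqrt (1 - gfun H t ρ ^ 2) := by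
    unfold gfun
    fun_prop
  exact intervalIntegral.integral_hasDerivAt_right
    (ContinuousOn.intervalIntegrable fun ρ hρ => (hcont ρ hρ).continuousWithinAt)
    hmeas.stronglyMeasurable.stronglyMeasurableAtFilter (hcont r Set.right_mem_uIcc)

lemma graphForm_hfun_rotation {p : ℝ × ℝ} (hH : 0 < H) (hp : enorm2 p ≠ 0)
    (hg : ∀ ρ ∈ Set.uIcc (1 / (2 * H)) (enorm2 p), |gfun H t ρ| < 1) :
    graphForm (hfun H t) p (-p.2, p.1) = enorm2 p * gfun H t (enorm2 p) := by
  have hf := hasDerivAt_ffun hH ((enorm2_nonneg p).lt_of_ne' hp) hg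
  exact (graphForm_comp_enorm2_rotation hp hf).trans <| congrArg _ <|
    div_sqrt_one_sub_sq_div_sqrt_one_add_sq (hg _ Set.right_mem_uIcc)

lemma integral_graphForm_hfun {κ : ℝ} (hH : 0 < H) (hκ : 0 < κ)
    (hg : ∀ ρ ∈ Set.uIcc (1 / (2 * H)) (1 / κ), |gfun H t ρ| < 1) (θ₁ θ₂ : ℝ) :
    ∫ θ in θ₁..θ₂, graphForm (hfun H t) (Real.cos θ / κ, Real.sin θ / κ)
        (-(Real.sin θ / κ), Real.cos θ / κ) =
      gfun H t (1 / κ) * ((θ₂ - θ₁) / κ) := by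
  have hconst (θ : ℝ) : graphForm (hfun H t) (Real.cos θ / κ, Real.sin θ / κ)
      (-(Real.sin θ / κ), Real.cos θ / κ) = 1 / κ * gfun H t (1 / κ) := by
    have hnorm := enorm2_cos_sin_div hκ.le θ
    have hform := graphForm_hfun_rotation hH (hnorm.trans_ne (by positivity)) (hnorm.symm ▸ hg)
    rwa [hnorm] at hform
  simp only [hconst, intervalIntegral.integral_const, smul_eq_mul]
  ring

lemma integral_graphForm_hfun_two_mul (hH : 0 < H)
    (ht : t ∈ Set.Ioo (-(3 / (4 * H))) (1 / (4 * H))) (θ₁ θ₂ : ℝ) :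
    ∫ θ in θ₁..θ₂, graphForm (hfun H t) (Real.cos θ / (2 * H), Real.sin θ / (2 * H))
        (-(Real.sin θ / (2 * H)), Real.cos θ / (2 * H)) =
      (1 / 2 + 2 * H * t) * ((θ₂ - θ₁) / (2 * H)) := by
  have hg : ∀ ρ ∈ Set.uIcc (1 / (2 * H)) (1 / (2 * H)), |gfun H t ρ| < 1 := by
    simpa only [Set.uIcc_self, Set.mem_singleton_iff, forall_eq] using
      abs_gfun_one_div_two_mul_lt_one hH ht
  rw [integral_graphForm_hfun hH (by positivity) hg, gfun_one_div_two_mul hH.ne']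

end Profile

theorem stmt_16_general (H θ₁ θ₂ : ℝ) (hH : 0 < H) :
    (∀ t ∈ Set.Ioo (-(3 / (4 * H))) (1 / (4 * H)),
      ∫ θ in θ₁..θ₂, graphForm (hfun H t) (Real.cos θ / (2 * H), Real.sin θ / (2 * H))
          (-(Real.sin θ / (2 * H)), Real.cos θ / (2 * H)) =
        (1 / 2 + 2 * H * t) * ((θ₂ - θ₁) / (2 * H))) ∧
    Tendsto (fun t : ℝ =>
        ∫ θ in θ₁..θ₂, graphForm (hfun H t) (Real.cos θ / (2 * H), Real.sin θ / (2 * H))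
          (-(Real.sin θ / (2 * H)), Real.cos θ / (2 * H)))
      (nhdsWithin (1 / (4 * H)) (Set.Iio (1 / (4 * H)))) (nhds ((θ₂ - θ₁) / (2 * H))) := by
  refine ⟨fun t ht => integral_graphForm_hfun_two_mul hH ht θ₁ θ₂, ?_⟩
  have hlim : Tendsto (fun t : ℝ => (1 / 2 + 2 * H * t) * ((θ₂ - θ₁) / (2 * H)))
      (nhdsWithin (1 / (4 * H)) (Set.Iio (1 / (4 * H)))) (nhds ((θ₂ - θ₁) / (2 * H))) := by
    refine tendsto_nhdsWithin_of_tendsto_nhds (Continuous.tendsto' (by fun_prop) _ _ ?_)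
    field_simp
    ring
  have hlt : -(3 / (4 * H)) < 1 / (4 * H) := (neg_neg_of_pos (by positivity)).trans (by positivity)
  refine hlim.congr' ?_
  filter_upwards [Ioo_mem_nhdsLT hlt] with t ht
  exact (integral_graphForm_hfun_two_mul hH ht θ₁ θ₂).symm

/-- on the arc `C` of the circle of radius `1/(2H)` centered at the origin
parametrized counterclockwise by `c(θ) = (cos θ/(2H), sin θ/(2H))`, `θ ∈ [θ₁, θ₂]`, one has
`∫_C ω_{h_t} = (1/2 + 2Ht) ℓ(C)`; in particular `∫_C ω_{h_t} → ℓ(C)` as `t → 1/(4H)⁻`. -/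
theorem stmt_16 (H θ₁ θ₂ : ℝ) (hH : 0 < H) (hθ : θ₁ < θ₂) :
    (∀ t ∈ Set.Ioo 0 (1 / (4 * H)),
      (∫ θ in θ₁..θ₂,
        (pdx (hfun H t) (Real.cos θ / (2 * H), Real.sin θ / (2 * H))
            * (Real.cos θ / (2 * H))
          - pdy (hfun H t) (Real.cos θ / (2 * H), Real.sin θ / (2 * H))
            * (-(Real.sin θ / (2 * H))))
          / Wgraph (hfun H t) (Real.cos θ / (2 * H), Real.sin θ / (2 * H)))
      = (1 / 2 + 2 * H * t) * ((θ₂ - θ₁) / (2 * H))) ∧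
    Tendsto (fun t : ℝ =>
      ∫ θ in θ₁..θ₂,
        (pdx (hfun H t) (Real.cos θ / (2 * H), Real.sin θ / (2 * H))
            * (Real.cos θ / (2 * H))
          - pdy (hfun H t) (Real.cos θ / (2 * H), Real.sin θ / (2 * H))
            * (-(Real.sin θ / (2 * H))))
          / Wgraph (hfun H t) (Real.cos θ / (2 * H), Real.sin θ / (2 * H)))
      (nhdsWithin (1 / (4 * H)) (Set.Iio (1 / (4 * H))))
      (nhds ((θ₂ - θ₁) / (2 * H))) :=
  (stmt_16_general H θ₁ θ₂ hH).imp_left fun hflux t ht =>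
    hflux t ⟨(neg_neg_of_pos (by positivity)).trans ht.1, ht.2⟩
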